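/- Let k ≥ 3 be an integer divisible by 3 and let D be a finite digraph belonging to the family 𝒟₂. Then the Cartesian product D □ C_k^0 is an ECD digraph. -/

import Mathlib

/-- The closed out-neighborhood of `v` in the digraph with arc relation `A`. -/
def closedOut {V : Type*} (A : V → V → Prop) (v : V) : Set V := {v} ∪ {u | A v u}

/-- `S` is an efficient closed dominating (ECD) set: the closed out-neighborhoods
centered in vertices of `S` are pairwise disjoint and cover the whole vertex set. -/
def IsECD {V : Type*} (A : V → V → Prop) (S : Set V) : Prop :=
  (∀ v ∈ S, ∀ w ∈ S, v ≠ w → closedOut A v ∩ closedOut A w = ∅) ∧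
  (⋃ v ∈ S, closedOut A v) = Set.univ

/-- A digraph is an ECD digraph if it admits an ECD set. -/
def IsECDDigraph {V : Type*} (A : V → V → Prop) : Prop := ∃ S, IsECD A S

/-- `S` is an ECD set of the subdigraph induced by `T` (neighborhoods restricted to `T`). -/
def IsECDWithin {V : Type*} (A : V → V → Prop) (T S : Set V) : Prop :=
  S ⊆ T ∧
  (∀ v ∈ S, ∀ w ∈ S, v ≠ w → (closedOut A v ∩ T) ∩ (closedOut A w ∩ T) = ∅) ∧
  (⋃ v ∈ S, closedOut A v ∩ T) = T

/-- Arc relation of the Cartesian product of two digraphs. -/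
def cartArc {V W : Type*} (A : V → V → Prop) (B : W → W → Prop) :
    V × W → V × W → Prop :=
  fun p q => (A p.1 q.1 ∧ p.2 = q.2) ∨ (p.1 = q.1 ∧ B p.2 q.2)

/-- Arc relation of the directed cycle `C_k^0` on `ZMod k`: arcs `(i, i+1)`. -/
def cycArc (k : ℕ) : ZMod k → ZMod k → Prop := fun i j => j = i + 1

/-- The subdigraph induced by `T` belongs to `𝒟₁` with the partition `W, Z, V'`. -/
def InD1OnParts {V : Type*} (A : V → V → Prop) (T W Z V' : Set V) : Prop :=
  W ∪ Z ∪ V' = T ∧ Disjoint W Z ∧ Disjoint W V' ∧ Disjoint Z V' ∧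
  IsECDWithin A (W ∪ V') W ∧ IsECDWithin A (Z ∪ V') Z ∧
  ∀ w ∈ W, ∀ z ∈ Z, ¬ A w z ∧ ¬ A z w

/-- The subdigraph induced by `T` belongs to the family `𝒟₁`. -/
def InD1On {V : Type*} (A : V → V → Prop) (T : Set V) : Prop :=
  ∃ W Z V', InD1OnParts A T W Z V'

/-- The digraph belongs to the family `𝒟₁`. -/
def InD1 {V : Type*} (A : V → V → Prop) : Prop := InD1On A Set.univ

/-- The subdigraph induced by `T` belongs to the family `𝒟₂`. -/
def InD2On {V : Type*} (A : V → V → Prop) (T : Set V) : Prop :=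
  ∃ U1 U2 U3 : Set V, U1 ∪ U2 ∪ U3 = T ∧
    Disjoint U1 U2 ∧ Disjoint U1 U3 ∧ Disjoint U2 U3 ∧
    (∀ x ∈ T, ∀ y ∈ T, A x y →
      (x ∈ U1 ∧ y ∈ U2) ∨ (x ∈ U2 ∧ y ∈ U3) ∨ (x ∈ U3 ∧ y ∈ U1)) ∧
    IsECDWithin A (U1 ∪ U2) U1 ∧ IsECDWithin A (U2 ∪ U3) U2 ∧
    IsECDWithin A (U3 ∪ U1) U3

/-- The digraph belongs to the family `𝒟₂`. -/
def InD2 {V : Type*} (A : V → V → Prop) : Prop := InD2On A Set.univ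

/-- The digraph belongs to the family `𝒟₃`. -/
def InD3 {V : Type*} (A : V → V → Prop) : Prop :=
  ∃ V1 V2 W Z V' : Set V, V1 ∪ V2 = Set.univ ∧ Disjoint V1 V2 ∧
    InD1OnParts A V1 W Z V' ∧ InD2On A V2 ∧
    (∀ x y, A x y →
      (x ∈ V1 ∧ y ∈ V1) ∨ (x ∈ V2 ∧ y ∈ V2) ∨ (x ∈ V' ∧ y ∈ V2)) ∧
    ∃ x ∈ V', ∃ y ∈ V2, A x y

/-!
`𝒟₂` consists of the digraphs that map homomorphically to the directed triangle `C_3^0` and in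
which every vertex has exactly one in-neighbor. In particular `C_k^0` is in `𝒟₂` when `3 ∣ k`, by
reduction modulo `3`, and it suffices to treat `D □ F` for arbitrary `D` and `F` in `𝒟₂`.
Let `c` and `d` be homomorphisms from `D` and `F` to `C_3^0`. A vertex `(u, l)` of `D □ F` lies in
the closed out-neighborhoods of itself, `(x, l)` and `(u, m)` only, where `x` and `m` are the
in-neighbors of `u` and `l`. The color difference `c p.1 - d p.2` at these three vertices is `δ`,
`δ - 1` and `δ + 1`, hence `0` at exactly one of them, so the vertices of color difference `0`
form an ECD set.
-/

section

variable {V W : Type*} {A : V → V → Prop} {B : W → W → Prop}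

theorem mem_closedOut {u v : V} : u ∈ closedOut A v ↔ u = v ∨ A v u := Iff.rfl

theorem isECDWithin_iff_existsUnique {S T : Set V} :
    IsECDWithin A T S ↔ S ⊆ T ∧ ∀ y ∈ T, ∃! x, x ∈ S ∧ y ∈ closedOut A x := by
  refine and_congr_right fun _ => ⟨fun ⟨hdisj, hcover⟩ y hy => ?_, fun h => ⟨?_, ?_⟩⟩
  · obtain ⟨x, hxS, hxy, -⟩ := Set.mem_iUnion₂.mp (hcover.symm ▸ hy)
    refine ⟨x, ⟨hxS, hxy⟩, fun x' ⟨hx'S, hx'y⟩ => ?_⟩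
    by_contra hne
    exact (hdisj x' hx'S x hxS hne).le ⟨⟨hx'y, hy⟩, ⟨hxy, hy⟩⟩
  · intro v hv w hw hne
    refine Set.eq_empty_of_forall_notMem fun y ⟨⟨hvy, hy⟩, ⟨hwy, _⟩⟩ => hne ?_
    exact (h y hy).unique ⟨hv, hvy⟩ ⟨hw, hwy⟩
  · refine Set.Subset.antisymm (Set.iUnion₂_subset fun _ _ => Set.inter_subset_right) fun y hy => ?_
    obtain ⟨x, hxS, hxy⟩ := (h y hy).exists
    exact Set.mem_biUnion hxS ⟨hxy, hy⟩

theorem isECDWithin_univ_iff {S : Set V} : IsECDWithin A Set.univ S ↔ IsECD A S := by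
  simp only [IsECDWithin, IsECD, Set.subset_univ, Set.inter_univ, true_and]

theorem isECD_iff_existsUnique {S : Set V} :
    IsECD A S ↔ ∀ y, ∃! x, x ∈ S ∧ y ∈ closedOut A x := by
  simp only [← isECDWithin_univ_iff, isECDWithin_iff_existsUnique, Set.subset_univ, Set.mem_univ,
    true_and, forall_const]

theorem isECDWithin_union_iff {S T : Set V} (hST : Disjoint S T)
    (hS : ∀ x ∈ S, ∀ y ∈ S, ¬ A x y) :
    IsECDWithin A (S ∪ T) S ↔ ∀ y ∈ T, ∃! x, x ∈ S ∧ A x y := by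
  have dominators_of_mem_right {y : V} (hy : y ∈ T) (x : V) :
      x ∈ S ∧ y ∈ closedOut A x ↔ x ∈ S ∧ A x y :=
    and_congr_right fun hx => or_iff_right fun hyx => hST.ne_of_mem hx hy hyx.symm
  have dominators_of_mem_left {y : V} (hy : y ∈ S) (x : V) :
      x ∈ S ∧ y ∈ closedOut A x ↔ x = y :=
    ⟨fun ⟨hx, hxy⟩ => (hxy.resolve_right (hS x hx y hy)).symm, fun hxy => ⟨hxy ▸ hy, .inl hxy.symm⟩⟩
  rw [isECDWithin_iff_existsUnique, and_iff_right Set.subset_union_left]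
  refine ⟨fun h y hy => ?_, fun h y hy => ?_⟩
  · simpa only [dominators_of_mem_right hy] using h y (.inr hy)
  · rcases hy with hy | hy
    · simp only [dominators_of_mem_left hy, existsUnique_eq]
    · simpa only [dominators_of_mem_right hy] using h y hy

theorem exists_preimage_singleton_eq_of_partition {U₁ U₂ U₃ : Set V}
    (hcover : U₁ ∪ U₂ ∪ U₃ = Set.univ) (h₁₂ : Disjoint U₁ U₂) (h₁₃ : Disjoint U₁ U₃)
    (h₂₃ : Disjoint U₂ U₃) :
    ∃ c : V → ZMod 3, c ⁻¹' {0} = U₁ ∧ c ⁻¹' {1} = U₂ ∧ c ⁻¹' {2} = U₃ := by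
  classical
  have h01 : (0 : ZMod 3) ≠ 1 := by decide
  have h02 : (0 : ZMod 3) ≠ 2 := by decide
  have h12 : (1 : ZMod 3) ≠ 2 := by decide
  rw [Set.disjoint_left] at h₁₂ h₁₃ h₂₃
  have mem_cases (v : V) : (v ∈ U₁ ∨ v ∈ U₂) ∨ v ∈ U₃ := Set.eq_univ_iff_forall.mp hcover v
  refine ⟨fun v => if v ∈ U₁ then 0 else if v ∈ U₂ then 1 else 2, ?_, ?_, ?_⟩ <;>
    ext v <;> have := mem_cases v <;> grind

theorem inD2_iff_exists_relHom :
    InD2 A ↔ ∃ c : A →r cycArc 3,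
      ∀ i, IsECDWithin A (c ⁻¹' {i} ∪ c ⁻¹' {i + 1}) (c ⁻¹' {i}) := by
  constructor
  · rintro ⟨U₁, U₂, U₃, hcover, h₁₂, h₁₃, h₂₃, harc, hecd₁, hecd₂, hecd₃⟩
    obtain ⟨c, rfl, rfl, rfl⟩ := exists_preimage_singleton_eq_of_partition hcover h₁₂ h₁₃ h₂₃
    have map_arc {x y : V} (hxy : A x y) : cycArc 3 (c x) (c y) := by
      rcases harc x trivial y trivial hxy with ⟨hx, hy⟩ | ⟨hx, hy⟩ | ⟨hx, hy⟩ <;>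
        rw [Set.mem_preimage, Set.mem_singleton_iff] at hx hy <;> rw [hx, hy] <;> rfl
    refine ⟨⟨c, map_arc⟩, fun i => ?_⟩
    fin_cases i
    exacts [hecd₁, hecd₂, hecd₃]
  · rintro ⟨c, hecd⟩
    have disjoint_fibers {i j : ZMod 3} (hij : i ≠ j) : Disjoint (c ⁻¹' {i}) (c ⁻¹' {j}) :=
      (Set.disjoint_singleton.mpr hij).preimage c
    have color_cases : ∀ i : ZMod 3, i = 0 ∨ i = 1 ∨ i = 2 := by decide
    refine ⟨c ⁻¹' {0}, c ⁻¹' {1}, c ⁻¹' {2}, ?_, disjoint_fibers (by decide),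
      disjoint_fibers (by decide), disjoint_fibers (by decide), ?_, hecd 0, hecd 1, hecd 2⟩
    · exact Set.eq_univ_of_forall fun x => or_assoc.mpr (color_cases (c x))
    · intro x _ y _ hxy
      have hcy : c y = c x + 1 := c.map_rel hxy
      rcases color_cases (c x) with hx | hx | hx <;> rw [hx] at hcy
      exacts [.inl ⟨hx, hcy⟩, .inr (.inl ⟨hx, hcy⟩), .inr (.inr ⟨hx, hcy⟩)]

theorem isECDWithin_preimage_singleton_iff (c : A →r cycArc 3) (i : ZMod 3) :
    IsECDWithin A (c ⁻¹' {i} ∪ c ⁻¹' {i + 1}) (c ⁻¹' {i}) ↔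
      ∀ y, c y = i + 1 → ∃! x, A x y := by
  have i_ne_succ : i ≠ i + 1 := by revert i; decide
  have no_arc_within_fiber (x : V) (hx : c x = i) (y : V) (hy : c y = i) : ¬ A x y :=
    fun hxy => i_ne_succ (by simpa only [cycArc, hx, hy] using c.map_rel hxy)
  have color_of_inNeighbor {x y : V} (hy : c y = i + 1) (hxy : A x y) : c x = i :=
    add_right_cancel ((c.map_rel hxy).symm.trans hy)
  rw [isECDWithin_union_iff ((Set.disjoint_singleton.mpr i_ne_succ).preimage c)
    no_arc_within_fiber]
  refine forall₂_congr fun y hy => existsUnique_congr fun x => ?_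
  exact and_iff_right_of_imp (color_of_inNeighbor hy)

theorem inD2_iff_nonempty_relHom_and_existsUnique :
    InD2 A ↔ Nonempty (A →r cycArc 3) ∧ ∀ y, ∃! x, A x y := by
  simp only [inD2_iff_exists_relHom, isECDWithin_preimage_singleton_iff]
  constructor
  · rintro ⟨c, h⟩
    exact ⟨⟨c⟩, fun y => h (c y - 1) y (sub_add_cancel _ _).symm⟩
  · rintro ⟨⟨c⟩, h⟩
    exact ⟨c, fun _ y _ => h y⟩

theorem inD2_cycArc {k : ℕ} (hk : 3 ∣ k) : InD2 (cycArc k) := by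
  rw [inD2_iff_nonempty_relHom_and_existsUnique]
  refine ⟨⟨ZMod.castHom hk (ZMod 3), ?_⟩, fun j => ⟨j - 1, (sub_add_cancel j 1).symm, ?_⟩⟩
  · rintro i _ rfl
    exact (map_add _ i 1).trans (by rw [map_one])
  · rintro i rfl
    exact (add_sub_cancel_right i 1).symm

theorem mem_closedOut_cartArc_iff {u x : V} {l m : W} (hx : ∀ v, A v u ↔ v = x)
    (hm : ∀ j, B j l ↔ j = m) (p : V × W) :
    (u, l) ∈ closedOut (cartArc A B) p ↔ p = (u, l) ∨ p = (x, l) ∨ p = (u, m) := by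
  simp only [mem_closedOut, cartArc, hx, hm, Prod.ext_iff, eq_comm (a := u), eq_comm (a := l)]

theorem isECD_cartArc_setOf_eq (c : A →r cycArc 3) (d : B →r cycArc 3)
    (hA : ∀ y, ∃! x, A x y) (hB : ∀ y, ∃! x, B x y) :
    IsECD (cartArc A B) {p | c p.1 = d p.2} := by
  rw [isECD_iff_existsUnique]
  rintro ⟨u, l⟩
  obtain ⟨x, hxu, hx⟩ := hA u
  obtain ⟨m, hml, hm⟩ := hB l
  have hcu : c u = c x + 1 := c.map_rel hxu
  have hdl : d l = d m + 1 := d.map_rel hml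
  simp only [mem_closedOut_cartArc_iff (fun v => ⟨hx v, (· ▸ hxu)⟩) (fun j => ⟨hm j, (· ▸ hml)⟩),
    Set.mem_ofPred_eq]
  have exactly_one_color_eq : ∀ a b : ZMod 3,
      (a + 1 = b + 1 ∧ a ≠ b + 1 ∧ a + 1 ≠ b) ∨ (a + 1 ≠ b + 1 ∧ a = b + 1 ∧ a + 1 ≠ b) ∨
        (a + 1 ≠ b + 1 ∧ a ≠ b + 1 ∧ a + 1 = b) := by decide
  have color_cases := exactly_one_color_eq (c x) (d m)
  rw [← hcu, ← hdl] at color_cases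
  rcases color_cases with ⟨hul, hxl, hum⟩ | ⟨hul, hxl, hum⟩ | ⟨hul, hxl, hum⟩
  · refine ⟨(u, l), ⟨hul, .inl rfl⟩, ?_⟩
    rintro _ ⟨hp, rfl | rfl | rfl⟩
    exacts [rfl, absurd hp hxl, absurd hp hum]
  · refine ⟨(x, l), ⟨hxl, .inr (.inl rfl)⟩, ?_⟩
    rintro _ ⟨hp, rfl | rfl | rfl⟩
    exacts [absurd hp hul, rfl, absurd hp hum]
  · refine ⟨(u, m), ⟨hum, .inr (.inr rfl)⟩, ?_⟩
    rintro _ ⟨hp, rfl | rfl | rfl⟩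
    exacts [absurd hp hul, absurd hp hxl, rfl]

theorem cart_cycle_ecd_of_d2_general (hA : InD2 A) (hB : InD2 B) :
    IsECDDigraph (cartArc A B) := by
  obtain ⟨⟨c⟩, hA⟩ := inD2_iff_nonempty_relHom_and_existsUnique.mp hA
  obtain ⟨⟨d⟩, hB⟩ := inD2_iff_nonempty_relHom_and_existsUnique.mp hB
  exact ⟨_, isECD_cartArc_setOf_eq c d hA hB⟩

end

/-- If `k ≥ 3` is divisible by 3 and the finite digraph `D` belongs to `𝒟₂`,
then `D □ C_k^0` is an ECD digraph. -/
theorem cart_cycle_ecd_of_d2 {V : Type*} [Fintype V] (A : V → V → Prop)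
    (k : ℕ) (hk : 3 ≤ k) (hk3 : 3 ∣ k) (hD : InD2 A) :
    IsECDDigraph (cartArc A (cycArc k)) := by
  exact cart_cycle_ecd_of_d2_general hD (inD2_cycArc hk3)
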